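/- arXiv:0912.1094 — 2 statements merged into one kernel-verified Lean document; each statement's English description precedes it below -/
import Mathlib

section
/- The shift T is nonsingular with respect to P (i.e. P∘T and P are mutually absolutely continuous) if and only if ∑_{k∈ℤ} (P_k({0}) − P_{k−1}({0}))² < ∞. -/
open MeasureTheory Filter Topology

noncomputable section

/-- The sequence space `{0,1}^ℤ`, with `true` playing the role of `1`. -/
abbrev Xspace := ℤ → Bool

/-- The left shift `(Tw)_i = w_{i+1}`. -/
def shiftT (w : Xspace) : Xspace := fun i => w (i + 1)

/-- The inverse of the left shift, so that `P ∘ T = Measure.map shiftInv P`. -/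
def shiftInv (w : Xspace) : Xspace := fun i => w (i - 1)

/-- `coordWt p b` is `P_k({b})` when `P_k({0}) = p`. -/
def coordWt (p : ℝ) (b : Bool) : ℝ := if b then 1 - p else p

/-- The set `A_t = {∏_{u=1}^t λ_u^{x_u} : x_u ∈ ℤ, |x_u| ≤ n_u}`. -/
def Aset (lam : ℕ → ℝ) (nn : ℕ → ℕ) (t : ℕ) : Set ℝ :=
  {x | ∃ c : ℕ → ℤ, (∀ u, |c u| ≤ (nn u : ℤ)) ∧ x = ∏ u ∈ Finset.Icc 1 t, lam u ^ c u}

/-- The data of Kosloff's inductive construction: a summable sequence `ε_t > 0`,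
`M_0 = 1`, `λ_t = exp(2^{-k_t})` with `k_t = ⌊log₂(M_{t-1}/ε_t)⌋ + 1`,
`n_t` a positive integer satisfying Property *, `N_t = M_{t-1} + n_t`,
`m_t = N_t (2 + 2^{3N_t})`, `M_t = N_t + m_t`. -/
structure KosloffData where
  eps : ℕ → ℝ
  lam : ℕ → ℝ
  nn : ℕ → ℕ
  M : ℕ → ℕ
  N : ℕ → ℕ
  m : ℕ → ℕ
  eps_pos : ∀ t, 1 ≤ t → 0 < eps t
  eps_summable : Summable eps
  M_zero : M 0 = 1
  lam_def : ∀ t, 1 ≤ t →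
    lam t = Real.exp ((2 : ℝ) ^ (-(⌊Real.logb 2 ((M (t - 1) : ℝ) / eps t)⌋ + 1)))
  nn_pos : ∀ t, 1 ≤ t → 0 < nn t
  prop_star : ∀ t, 1 ≤ t → ∀ a ∈ Aset lam nn (t - 1), a ^ 2 ≤ lam t ^ ((nn t : ℝ) / 4)
  N_def : ∀ t, 1 ≤ t → N t = M (t - 1) + nn t
  m_def : ∀ t, 1 ≤ t → m t = N t * (2 + 2 ^ (3 * N t))
  M_def : ∀ t, 1 ≤ t → M t = N t + m t

/-- `P` is the product measure `∏_k P_k` of Kosloff's construction, where `p k = P_k({0})`: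
`p k = 1/2` for `k ≥ 0`, `p k = 1/(1+λ_t)` for `-N_t < k ≤ -M_{t-1}`, and `p k = 1/2`
for `-M_t < k ≤ -N_t`; cylinders get product mass. -/
def IsKosloffMeasure (D : KosloffData) (p : ℤ → ℝ) (P : Measure Xspace) : Prop :=
  IsProbabilityMeasure P ∧
  (∀ k : ℤ, 0 ≤ k → p k = 1 / 2) ∧
  (∀ t : ℕ, 1 ≤ t → ∀ k : ℤ, -(D.N t : ℤ) < k → k ≤ -(D.M (t - 1) : ℤ) →
      p k = 1 / (1 + D.lam t)) ∧
  (∀ t : ℕ, 1 ≤ t → ∀ k : ℤ, -(D.M t : ℤ) < k → k ≤ -(D.N t : ℤ) → p k = 1 / 2) ∧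
  (∀ k l : ℤ, ∀ b : ℤ → Bool,
    P {w : Xspace | ∀ i ∈ Finset.Icc k l, w i = b i}
      = ∏ i ∈ Finset.Icc k l, ENNReal.ofReal (coordWt (p i) (b i)))

/-- The Radon–Nikodym derivative `(Tⁿ)' = d(P∘Tⁿ)/dP`. -/
def rnD (P : Measure Xspace) (n : ℕ) : Xspace → ENNReal :=
  Measure.rnDeriv (Measure.map (shiftInv^[n]) P) P

/-- `T` is nonsingular: `P∘T` and `P` are mutually absolutely continuous. -/
def ShiftNonsingular (P : Measure Xspace) : Prop :=
  Measure.map shiftInv P ≪ P ∧ P ≪ Measure.map shiftInv P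

/-- The ratio set `R(T,P)` of the shift. -/
def ratioSet (P : Measure Xspace) : Set ℝ :=
  {a | 0 ≤ a ∧ ∀ A : Set Xspace, MeasurableSet A → 0 < P A → ∀ ε : ℝ, 0 < ε → ∃ n : ℕ,
      0 < P (A ∩ shiftT^[n] ⁻¹' A ∩ {w | |(rnD P n w).toReal - a| ≤ ε})}

/-- `t(n) = min {t ≥ 1 : n < N_t}`. -/
def tOf (D : KosloffData) (n : ℕ) : ℕ := sInf {t : ℕ | 1 ≤ t ∧ n < D.N t}

/-- `Υ_u(w) = ∑_{k=-N_u+1}^{-M_{u-1}} w_k`. -/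
def Ups (D : KosloffData) (u : ℕ) (w : Xspace) : ℤ :=
  ∑ k ∈ Finset.Icc (-(D.N u : ℤ) + 1) (-(D.M (u - 1) : ℤ)), (if w k then 1 else 0)

/-- `f_t(w) = ∏_{u=1}^t λ_u^{Υ_u(w)}`. -/
def fT (D : KosloffData) (t : ℕ) (w : Xspace) : ℝ :=
  ∏ u ∈ Finset.Icc 1 t, D.lam u ^ Ups D u w

/-- The ratio `P_{k-n}({w_k}) / P_k({w_k})`. -/
def rr (p : ℤ → ℝ) (n : ℕ) (w : Xspace) (k : ℤ) : ℝ :=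
  coordWt (p (k - n)) (w k) / coordWt (p k) (w k)

/-- A general product measure on `{0,1}^ℤ` with `q k = P_k({1})`. -/
def IsProductMeasure (q : ℤ → ℝ) (P : Measure Xspace) : Prop :=
  IsProbabilityMeasure P ∧
  ∀ k l : ℤ, ∀ b : ℤ → Bool,
    P {w : Xspace | ∀ i ∈ Finset.Icc k l, w i = b i}
      = ∏ i ∈ Finset.Icc k l, ENNReal.ofReal (if b i then q i else 1 - q i)

/-!
On a finite space, `1 + χ²(ν ‖ μ) = ∑ x, ν{x}² / μ{x}` and `1 - H²(μ, ν) = ∑ x, √(μ{x} ν{x})` are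
both multiplicative over products. Cauchy–Schwarz gives `ν(C)² ≤ (1 + χ²) μ(C)`, so for infinite
products `ν(C)² ≤ exp (∑ χ²) μ(C)` holds on all cylinders `C`, and `ν ≪ μ` follows by approximation
when `∑ χ² < ∞`. In the other direction, comparing atoms produces a set `s` with `μ(s)` and `ν(sᶜ)`
at most `1 - H²`, which is at most `exp (-∑ H²)` for products; hence `∑ H² = ∞` makes the infinite
products mutually singular. When the atoms of `μ` are bounded below, `χ²` is at most, and `H²` at
least, a constant multiple of `∑ x, (ν{x} - μ{x})²`. Permuting the coordinates of a product
measure, as the shift does, permutes its marginals.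
-/

open Measure

lemma mutuallySingular_of_forall_exists_measure_le {α : Type*} [MeasurableSpace α]
    {μ ν : Measure α} (h : ∀ ε : ENNReal, 0 < ε → ∃ s, μ s ≤ ε ∧ ν sᶜ ≤ ε) : μ ⟂ₘ ν := by
  obtain ⟨ε, ε_pos, ε_sum⟩ := ENNReal.exists_pos_sum_of_countable' one_ne_zero ℕ
  choose s hμs hνs using fun n => h (ε n) (ε_pos n)
  have sum_ne_top {u : ℕ → ENNReal} (hu : ∀ n, u n ≤ ε n) : ∑' n, u n ≠ ⊤ :=
    ((ENNReal.tsum_le_tsum hu).trans_lt (ε_sum.trans ENNReal.one_lt_top)).ne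
  refine .mk (measure_limsup_atTop_eq_zero (sum_ne_top hμs))
    (measure_limsup_atTop_eq_zero (sum_ne_top hνs)) fun x _ => ?_
  simp only [Set.mem_union, mem_limsup_iff_frequently_mem, Set.mem_compl_iff,
    ← frequently_or_distrib, em, frequently_const]

lemma absolutelyContinuous_of_isSetAlgebra {α : Type*} [mα : MeasurableSpace α]
    {μ ν : Measure α} [IsFiniteMeasure μ] [IsFiniteMeasure ν] {C : Set (Set α)}
    (hC : IsSetAlgebra C) (hgen : mα = MeasurableSpace.generateFrom C)
    (h : ∀ ε : ℝ, 0 < ε → ∃ δ > 0, ∀ t ∈ C, μ.real t < δ → ν.real t ≤ ε) : ν ≪ μ := by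
  refine AbsolutelyContinuous.mk fun A hA hμA => ?_
  suffices ν.real A ≤ 0 from
    (measureReal_eq_zero_iff (measure_ne_top _ _)).1 (this.antisymm measureReal_nonneg)
  refine le_of_forall_pos_le_add fun ε hε => ?_
  obtain ⟨δ, hδ, hCδ⟩ := h (ε / 2) (half_pos hε)
  obtain ⟨t, htC, ht⟩ := exists_measure_symmDiff_lt_of_generateFrom_isSetRing (μ := μ + ν)
    hC.isSetRing ⟨{Set.univ}, by simp, by simpa using hC.univ_mem, by simp⟩ hgen hA
    (ENNReal.ofReal_pos.2 (lt_min hδ (half_pos hε)))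
  rw [ENNReal.lt_ofReal_iff_toReal_lt (measure_ne_top _ _), ← measureReal_def,
    measureReal_add_apply, lt_min_iff] at ht
  have hμt : μ.real t < δ := calc
    μ.real t ≤ μ.real (A ∪ symmDiff t A) := measureReal_mono (by grind)
    _ ≤ μ.real A + μ.real (symmDiff t A) := measureReal_union_le _ _
    _ ≤ μ.real (symmDiff t A) + ν.real (symmDiff t A) := by simp [measureReal_def, hμA]
    _ < δ := ht.1
  calc ν.real A ≤ ν.real (t ∪ symmDiff t A) := measureReal_mono (by grind)
    _ ≤ ν.real t + ν.real (symmDiff t A) := measureReal_union_le _ _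
    _ ≤ 0 + ε := by linarith [hCδ t htC hμt, measureReal_nonneg (μ := μ) (s := symmDiff t A)]

lemma measureReal_eq_zero_of_absolutelyContinuous {α : Type*} [MeasurableSpace α]
    {μ ν : Measure α} [IsFiniteMeasure μ] (h : ν ≪ μ) {s : Set α} (hs : μ.real s = 0) :
    ν.real s = 0 := by
  rw [measureReal_def, h ((measureReal_eq_zero_iff (measure_ne_top _ _)).1 hs), ENNReal.toReal_zero]

lemma measure_ext_of_cofinal_map_restrict {ι : Type*} {X : ι → Type*}
    [∀ i, MeasurableSpace (X i)] {μ ν : Measure (∀ i, X i)} [IsFiniteMeasure ν]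
    (h : ∀ I : Finset ι, ∃ J, I ⊆ J ∧ μ.map J.restrict = ν.map J.restrict) : μ = ν := by
  refine IsProjectiveLimit.unique (P := fun I => ν.map I.restrict) (fun I => ?_) fun I => rfl
  obtain ⟨J, hIJ, hJ⟩ := h I
  rw [← Finset.restrict₂_comp_restrict hIJ,
    ← Measure.map_map (Finset.measurable_restrict₂ hIJ) (Finset.measurable_restrict J), hJ,
    Measure.map_map (Finset.measurable_restrict₂ hIJ) (Finset.measurable_restrict J)]
  rfl

section FiniteSpace

variable {α : Type*} [Fintype α] [MeasurableSpace α]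

/-- The chi-square divergence `χ²(ν ‖ μ) = ∑ x, (ν{x} - μ{x})² / μ{x}` of measures on a finite
space. It is meaningful when `ν ≪ μ`; otherwise, atoms with `μ{x} = 0` contribute `0`. -/
def chiSqDiv (ν μ : Measure α) : ℝ := ∑ x, (ν.real {x} - μ.real {x}) ^ 2 / μ.real {x}

/-- The squared Hellinger distance `½ ∑ x, (√μ{x} - √ν{x})²` of measures on a finite space. -/
def hellingerSq (μ ν : Measure α) : ℝ := (∑ x, (√(μ.real {x}) - √(ν.real {x})) ^ 2) / 2

lemma chiSqDiv_nonneg (ν μ : Measure α) : 0 ≤ chiSqDiv ν μ :=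
  Finset.sum_nonneg fun _ _ => by positivity

lemma hellingerSq_nonneg (μ ν : Measure α) : 0 ≤ hellingerSq μ ν := by
  unfold hellingerSq; positivity

lemma chiSqDiv_le_sum_sq_div {ν μ : Measure α} {p : ℝ} (hp : 0 < p)
    (hμ : ∀ x, p ≤ μ.real {x}) :
    chiSqDiv ν μ ≤ (∑ x, (ν.real {x} - μ.real {x}) ^ 2) / p := by
  rw [chiSqDiv, Finset.sum_div]
  gcongr with x
  exact hμ x

lemma sq_sub_le_four_mul_sq_sqrt_sub_sqrt {a b : ℝ} (ha₀ : 0 ≤ a) (ha₁ : a ≤ 1) (hb₀ : 0 ≤ b)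
    (hb₁ : b ≤ 1) : (a - b) ^ 2 ≤ 4 * (√a - √b) ^ 2 := by
  have sqrt_add_le : √a + √b ≤ 2 := by
    linarith [Real.sqrt_le_one.2 ha₁, Real.sqrt_le_one.2 hb₁]
  calc (a - b) ^ 2 = (√a + √b) ^ 2 * (√a - √b) ^ 2 := by
        rw [← mul_pow, ← sq_sub_sq, Real.sq_sqrt ha₀, Real.sq_sqrt hb₀]
    _ ≤ 2 ^ 2 * (√a - √b) ^ 2 := by gcongr
    _ = 4 * (√a - √b) ^ 2 := by norm_num

lemma sum_sq_le_eight_mul_hellingerSq (μ ν : Measure α) [IsProbabilityMeasure μ]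
    [IsProbabilityMeasure ν] :
    ∑ x, (μ.real {x} - ν.real {x}) ^ 2 ≤ 8 * hellingerSq μ ν := calc
  ∑ x, (μ.real {x} - ν.real {x}) ^ 2
    ≤ ∑ x, 4 * (√(μ.real {x}) - √(ν.real {x})) ^ 2 := Finset.sum_le_sum fun _ _ =>
      sq_sub_le_four_mul_sq_sqrt_sub_sqrt measureReal_nonneg measureReal_le_one
        measureReal_nonneg measureReal_le_one
  _ = 8 * hellingerSq μ ν := by rw [← Finset.mul_sum, hellingerSq]; ring

variable [MeasurableSingletonClass α]

lemma one_add_chiSqDiv {ν μ : Measure α} [IsProbabilityMeasure ν] [IsProbabilityMeasure μ]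
    (h : ν ≪ μ) : 1 + chiSqDiv ν μ = ∑ x, ν.real {x} ^ 2 / μ.real {x} := by
  have expand (x : α) : (ν.real {x} - μ.real {x}) ^ 2 / μ.real {x} =
      ν.real {x} ^ 2 / μ.real {x} - 2 * ν.real {x} + μ.real {x} := by
    obtain hμ | hμ := eq_or_ne (μ.real {x}) 0
    · simp [hμ, measureReal_eq_zero_of_absolutelyContinuous h hμ]
    · field_simp
      ring
  simp only [chiSqDiv, expand, Finset.sum_add_distrib, Finset.sum_sub_distrib, ← Finset.mul_sum,
    sum_measureReal_singleton, Finset.coe_univ, probReal_univ]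
  ring

lemma one_sub_hellingerSq (μ ν : Measure α) [IsProbabilityMeasure μ] [IsProbabilityMeasure ν] :
    1 - hellingerSq μ ν = ∑ x, √(μ.real {x} * ν.real {x}) := by
  have expand (x : α) : (√(μ.real {x}) - √(ν.real {x})) ^ 2 =
      μ.real {x} + ν.real {x} - 2 * √(μ.real {x} * ν.real {x}) := by
    rw [sub_sq, Real.sq_sqrt measureReal_nonneg, Real.sq_sqrt measureReal_nonneg,
      Real.sqrt_mul measureReal_nonneg]
    ring
  simp only [hellingerSq, expand, Finset.sum_add_distrib, Finset.sum_sub_distrib,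
    ← Finset.mul_sum, sum_measureReal_singleton, Finset.coe_univ, probReal_univ]
  ring

lemma sq_measureReal_le_one_add_chiSqDiv_mul {ν μ : Measure α} [IsProbabilityMeasure ν]
    [IsProbabilityMeasure μ] (h : ν ≪ μ) (s : Set α) :
    ν.real s ^ 2 ≤ (1 + chiSqDiv ν μ) * μ.real s := by
  classical
  have ν_sq (x : α) : ν.real {x} ^ 2 = ν.real {x} ^ 2 / μ.real {x} * μ.real {x} := by
    refine (div_mul_cancel_of_imp fun hμ => ?_).symm
    simp [measureReal_eq_zero_of_absolutelyContinuous h hμ]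
  obtain ⟨S, rfl⟩ := s.toFinite.exists_finset_coe
  calc ν.real S ^ 2 = (∑ x ∈ S, ν.real {x}) ^ 2 := by rw [sum_measureReal_singleton]
    _ ≤ (∑ x ∈ S, ν.real {x} ^ 2 / μ.real {x}) * ∑ x ∈ S, μ.real {x} :=
      Finset.sum_sq_le_sum_mul_sum_of_sq_le_mul S (fun _ _ => by positivity)
        (fun _ _ => measureReal_nonneg) fun x _ => (ν_sq x).le
    _ ≤ (∑ x, ν.real {x} ^ 2 / μ.real {x}) * μ.real S := by
      rw [sum_measureReal_singleton]
      gcongr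
      exact S.subset_univ
    _ = (1 + chiSqDiv ν μ) * μ.real S := by rw [one_add_chiSqDiv h]

lemma exists_measureReal_le_one_sub_hellingerSq (μ ν : Measure α) [IsProbabilityMeasure μ]
    [IsProbabilityMeasure ν] :
    ∃ s, μ.real s ≤ 1 - hellingerSq μ ν ∧ ν.real sᶜ ≤ 1 - hellingerSq μ ν := by
  classical
  have measureReal_le {ξ : Measure α} [IsProbabilityMeasure ξ] (S : Finset α)
      (hS : ∀ x ∈ S, ξ.real {x} ^ 2 ≤ μ.real {x} * ν.real {x}) :
      ξ.real S ≤ 1 - hellingerSq μ ν := calc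
    ξ.real S = ∑ x ∈ S, ξ.real {x} := (sum_measureReal_singleton S).symm
    _ ≤ ∑ x ∈ S, √(μ.real {x} * ν.real {x}) :=
      Finset.sum_le_sum fun x hx => Real.le_sqrt_of_sq_le (hS x hx)
    _ ≤ ∑ x, √(μ.real {x} * ν.real {x}) :=
      Finset.sum_le_univ_sum_of_nonneg fun _ => Real.sqrt_nonneg _
    _ = 1 - hellingerSq μ ν := (one_sub_hellingerSq μ ν).symm
  let S : Finset α := {x | μ.real {x} ≤ ν.real {x}}
  refine ⟨S, measureReal_le S fun x hx => ?_, ?_⟩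
  · rw [sq]
    gcongr
    exact (Finset.mem_filter.1 hx).2
  · rw [← Finset.coe_compl]
    refine measureReal_le Sᶜ fun x hx => ?_
    rw [sq]
    gcongr
    exact (by simpa [S] using hx : ν.real {x} < μ.real {x}).le

end FiniteSpace

section FiniteProduct

variable {ι : Type*} [Fintype ι] {X : ι → Type*} [∀ i, MeasurableSpace (X i)]
  {μ ν : ∀ i, Measure (X i)}

lemma pi_real_singleton [∀ i, SigmaFinite (μ i)] (x : ∀ i, X i) :
    (Measure.pi μ).real {x} = ∏ i, (μ i).real {x i} := by
  simp [measureReal_def, ENNReal.toReal_prod]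

lemma pi_absolutelyContinuous_pi [∀ i, Countable (X i)] [∀ i, SigmaFinite (μ i)]
    [∀ i, SigmaFinite (ν i)] (h : ∀ i, ν i ≪ μ i) : Measure.pi ν ≪ Measure.pi μ := by
  refine AbsolutelyContinuous.mk fun s _ hs => ?_
  rw [← Set.biUnion_of_singleton s, measure_biUnion_null_iff s.to_countable] at hs ⊢
  intro x hx
  obtain ⟨i, -, hi⟩ := Finset.prod_eq_zero_iff.1 ((pi_singleton μ x).symm.trans (hs x hx))
  rw [pi_singleton]
  exact Finset.prod_eq_zero (Finset.mem_univ i) (h i hi)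

variable [DecidableEq ι] [∀ i, Fintype (X i)] [∀ i, MeasurableSingletonClass (X i)]
  [∀ i, IsProbabilityMeasure (μ i)] [∀ i, IsProbabilityMeasure (ν i)]

lemma one_add_chiSqDiv_pi (h : ∀ i, ν i ≪ μ i) :
    1 + chiSqDiv (Measure.pi ν) (Measure.pi μ) = ∏ i, (1 + chiSqDiv (ν i) (μ i)) := by
  simp only [one_add_chiSqDiv (h _), one_add_chiSqDiv (pi_absolutelyContinuous_pi h),
    pi_real_singleton, Fintype.prod_sum, ← Finset.prod_pow, Finset.prod_div_distrib]

lemma one_add_chiSqDiv_pi_le_exp_sum (h : ∀ i, ν i ≪ μ i) :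
    1 + chiSqDiv (Measure.pi ν) (Measure.pi μ) ≤ Real.exp (∑ i, chiSqDiv (ν i) (μ i)) := by
  rw [one_add_chiSqDiv_pi h]
  exact Real.prod_one_add_le_exp_sum _ fun i => chiSqDiv_nonneg (ν i) (μ i)

variable (μ ν)

lemma one_sub_hellingerSq_pi :
    1 - hellingerSq (Measure.pi μ) (Measure.pi ν) = ∏ i, (1 - hellingerSq (μ i) (ν i)) := by
  simp only [one_sub_hellingerSq, pi_real_singleton, Fintype.prod_sum, ← Finset.prod_mul_distrib]
  exact Finset.sum_congr rfl fun x _ => Real.sqrt_prod _ fun i _ => by positivity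

lemma one_sub_hellingerSq_pi_le_exp_neg_sum :
    1 - hellingerSq (Measure.pi μ) (Measure.pi ν) ≤
      Real.exp (-∑ i, hellingerSq (μ i) (ν i)) := by
  rw [one_sub_hellingerSq_pi, ← Finset.sum_neg_distrib, Real.exp_sum]
  refine Finset.prod_le_prod (fun i _ => ?_) fun i _ => Real.one_sub_le_exp_neg _
  rw [one_sub_hellingerSq]
  positivity

end FiniteProduct

section InfiniteProduct

variable {ι : Type*} {X : ι → Type*} [∀ i, Fintype (X i)] [∀ i, MeasurableSpace (X i)]
  [∀ i, MeasurableSingletonClass (X i)] {μ ν : ∀ i, Measure (X i)}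
  [∀ i, IsProbabilityMeasure (μ i)] [∀ i, IsProbabilityMeasure (ν i)]

lemma sq_infinitePi_real_le_exp_tsum_chiSqDiv_mul (h : ∀ i, ν i ≪ μ i)
    (hs : Summable fun i => chiSqDiv (ν i) (μ i)) {t : Set (∀ i, X i)}
    (ht : t ∈ measurableCylinders X) :
    (infinitePi ν).real t ^ 2 ≤
      Real.exp (∑' i, chiSqDiv (ν i) (μ i)) * (infinitePi μ).real t := by
  classical
  obtain ⟨I, S, hS, rfl⟩ := (mem_measurableCylinders t).1 ht
  have sum_le : ∑ i : I, chiSqDiv (ν i) (μ i) ≤ ∑' i, chiSqDiv (ν i) (μ i) := by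
    rw [Finset.sum_coe_sort I fun i => chiSqDiv (ν i) (μ i)]
    exact hs.sum_le_tsum I fun i _ => chiSqDiv_nonneg _ _
  simp only [measureReal_def, infinitePi_cylinder _ hS]
  calc (Measure.pi fun i : I => ν i).real S ^ 2
      ≤ (1 + chiSqDiv (Measure.pi fun i : I => ν i) (Measure.pi fun i : I => μ i)) *
          (Measure.pi fun i : I => μ i).real S :=
        sq_measureReal_le_one_add_chiSqDiv_mul (pi_absolutelyContinuous_pi fun i : I => h i) S
    _ ≤ Real.exp (∑' i, chiSqDiv (ν i) (μ i)) * (Measure.pi fun i : I => μ i).real S := by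
        gcongr
        exact (one_add_chiSqDiv_pi_le_exp_sum fun i : I => h i).trans (Real.exp_le_exp.2 sum_le)

theorem infinitePi_absolutelyContinuous_of_summable_chiSqDiv (h : ∀ i, ν i ≪ μ i)
    (hs : Summable fun i => chiSqDiv (ν i) (μ i)) : infinitePi ν ≪ infinitePi μ := by
  refine absolutelyContinuous_of_isSetAlgebra isSetAlgebra_measurableCylinders
    generateFrom_measurableCylinders.symm fun ε hε => ?_
  set K := Real.exp (∑' i, chiSqDiv (ν i) (μ i))
  have hK : 0 < K := Real.exp_pos _
  refine ⟨ε ^ 2 / K, by positivity, fun t ht hμt => ?_⟩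
  refine le_of_sq_le_sq ?_ hε.le
  calc (infinitePi ν).real t ^ 2 ≤ K * (infinitePi μ).real t :=
        sq_infinitePi_real_le_exp_tsum_chiSqDiv_mul h hs ht
    _ ≤ ε ^ 2 := ((lt_div_iff₀' hK).1 hμt).le

variable (μ ν) in
lemma exists_infinitePi_le_exp_neg_sum_hellingerSq (I : Finset ι) :
    ∃ s, (infinitePi μ).real s ≤ Real.exp (-∑ i ∈ I, hellingerSq (μ i) (ν i)) ∧
      (infinitePi ν).real sᶜ ≤ Real.exp (-∑ i ∈ I, hellingerSq (μ i) (ν i)) := by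
  classical
  obtain ⟨S, hμS, hνS⟩ := exists_measureReal_le_one_sub_hellingerSq
    (Measure.pi fun i : I => μ i) (Measure.pi fun i : I => ν i)
  have affinity_le := one_sub_hellingerSq_pi_le_exp_neg_sum (fun i : I => μ i) fun i : I => ν i
  rw [Finset.sum_coe_sort I fun i => hellingerSq (μ i) (ν i)] at affinity_le
  refine ⟨cylinder I S, ?_, ?_⟩
  · rw [measureReal_def, infinitePi_cylinder _ S.toFinite.measurableSet]
    exact hμS.trans affinity_le
  · rw [compl_cylinder, measureReal_def, infinitePi_cylinder _ Sᶜ.toFinite.measurableSet]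
    exact hνS.trans affinity_le

theorem infinitePi_mutuallySingular_of_not_summable_hellingerSq
    (hs : ¬ Summable fun i => hellingerSq (μ i) (ν i)) : infinitePi μ ⟂ₘ infinitePi ν := by
  refine mutuallySingular_of_forall_exists_measure_le fun ε hε => ?_
  obtain ⟨η, hη, hηε⟩ := ENNReal.lt_iff_exists_nnreal_btwn.1 hε
  obtain ⟨I, hI⟩ : ∃ I : Finset ι, -Real.log η < ∑ i ∈ I, hellingerSq (μ i) (ν i) := by
    by_contra! bounded
    exact hs (summable_of_sum_le (fun i => hellingerSq_nonneg _ _) bounded)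
  have exp_le : Real.exp (-∑ i ∈ I, hellingerSq (μ i) (ν i)) ≤ η := by
    rw [← Real.le_log_iff_exp_le (by exact_mod_cast hη)]
    linarith
  obtain ⟨s, hμs, hνs⟩ := exists_infinitePi_le_exp_neg_sum_hellingerSq μ ν I
  have measure_le {ξ : Measure (∀ i, X i)} [IsFiniteMeasure ξ] {t : Set (∀ i, X i)}
      (ht : ξ.real t ≤ η) : ξ t ≤ ε := by
    rw [← ofReal_measureReal]
    exact (ENNReal.ofReal_le_of_le_toReal ht).trans hηε.le
  exact ⟨s, measure_le (hμs.trans exp_le), measure_le (hνs.trans exp_le)⟩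

theorem infinitePi_absolutelyContinuous_iff_summable_sum_sq {p : ℝ} (hp : 0 < p)
    (hμ : ∀ i x, p ≤ (μ i).real {x}) :
    infinitePi ν ≪ infinitePi μ ↔
      Summable fun i => ∑ x, ((ν i).real {x} - (μ i).real {x}) ^ 2 := by
  constructor
  · intro hac
    have hellinger_summable : Summable fun i => hellingerSq (ν i) (μ i) := by
      by_contra hs
      exact IsProbabilityMeasure.ne_zero (infinitePi ν)
        (eq_zero_of_absolutelyContinuous_of_mutuallySingular hac
          (infinitePi_mutuallySingular_of_not_summable_hellingerSq hs))
    exact .of_nonneg_of_le (fun i => by positivity)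
      (fun i => sum_sq_le_eight_mul_hellingerSq (ν i) (μ i)) (hellinger_summable.mul_left 8)
  · intro hs
    have marginal_ac (i : ι) : ν i ≪ μ i := by
      refine AbsolutelyContinuous.mk fun s _ hμs => ?_
      obtain rfl | ⟨x, hx⟩ := s.eq_empty_or_nonempty
      · simp
      · have : (μ i).real {x} = 0 :=
          measureReal_mono_null (Set.singleton_subset_iff.2 hx) (by simp [measureReal_def, hμs])
        linarith [hμ i x]
    exact infinitePi_absolutelyContinuous_of_summable_chiSqDiv marginal_ac
      (.of_nonneg_of_le (fun i => chiSqDiv_nonneg _ _)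
        (fun i => chiSqDiv_le_sum_sq_div hp (hμ i)) (hs.div_const p))

end InfiniteProduct

lemma infinitePi_map_perm {ι α : Type*} [MeasurableSpace α] (e : Equiv.Perm ι)
    (μ : ι → Measure α) [∀ i, IsProbabilityMeasure (μ i)] :
    (infinitePi μ).map (fun w i => w (e i)) = infinitePi fun i => μ (e i) := by
  have h := infinitePi_map_piCongrLeft (fun i => μ (e i)) e.symm
  simp only [Equiv.apply_symm_apply] at h
  rw [← h]
  congr 1
  ext w i
  simp [MeasurableEquiv.coe_piCongrLeft, Equiv.piCongrLeft_apply]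

theorem shift_nonsingular_iff_kakutani_general {ι α : Type*} [Fintype α] [MeasurableSpace α]
    [MeasurableSingletonClass α] (e : Equiv.Perm ι) (μ : ι → Measure α)
    [∀ i, IsProbabilityMeasure (μ i)] {p : ℝ} (hp : 0 < p) (hμ : ∀ i x, p ≤ (μ i).real {x}) :
    ((infinitePi μ).map (fun w i => w (e i)) ≪ infinitePi μ ∧
        infinitePi μ ≪ (infinitePi μ).map fun w i => w (e i)) ↔
      Summable fun i => ∑ x, ((μ i).real {x} - (μ (e i)).real {x}) ^ 2 := by
  rw [infinitePi_map_perm, infinitePi_absolutelyContinuous_iff_summable_sum_sq hp hμ,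
    infinitePi_absolutelyContinuous_iff_summable_sum_sq hp fun i => hμ (e i)]
  simp only [sub_sq_comm, and_self]

lemma sum_sq_real_singleton_sub (μ ν : Measure Bool) [IsProbabilityMeasure μ]
    [IsProbabilityMeasure ν] :
    ∑ b, (μ.real {b} - ν.real {b}) ^ 2 = 2 * (μ.real {false} - ν.real {false}) ^ 2 := by
  have real_true (ξ : Measure Bool) [IsProbabilityMeasure ξ] :
      ξ.real {true} = 1 - ξ.real {false} := by
    rw [← probReal_compl_eq_one_sub (measurableSet_singleton false), Bool.compl_singleton,
      Bool.not_false]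
  rw [Fintype.sum_bool, real_true μ, real_true ν]
  ring

namespace IsProductMeasure

variable {q : ℤ → ℝ} {P : Measure Xspace}

lemma isProbabilityMeasure_map_eval (hP : IsProductMeasure q P) (k : ℤ) :
    IsProbabilityMeasure (P.map fun w => w k) :=
  have := hP.1
  isProbabilityMeasure_map (measurable_pi_apply k).aemeasurable

lemma map_eval_singleton (hP : IsProductMeasure q P) (k : ℤ) (b : Bool) :
    P.map (fun w => w k) {b} = ENNReal.ofReal (if b then q k else 1 - q k) := by
  rw [Measure.map_apply (measurable_pi_apply k) (measurableSet_singleton b)]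
  simpa [Set.preimage] using hP.2 k k fun _ => b

lemma map_eval_real_singleton (hP : IsProductMeasure q P) (k : ℤ) (b : Bool) :
    (P.map fun w => w k).real {b} = if b then q k else 1 - q k := by
  have := hP.isProbabilityMeasure_map_eval k
  -- Total mass one forces `0 ≤ q k ≤ 1`, so `ENNReal.ofReal` truncates nothing.
  have total : ∑ c, (P.map fun w => w k).real {c} = 1 := by
    rw [sum_measureReal_singleton, Finset.coe_univ, probReal_univ]
  simp only [measureReal_def, hP.map_eval_singleton, Fintype.sum_bool,
    ENNReal.toReal_ofReal'] at total ⊢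
  grind

lemma exists_eq_infinitePi (hP : IsProductMeasure q P) :
    ∃ μ : ℤ → Measure Bool, ∃ _ : ∀ k, IsProbabilityMeasure (μ k),
      P = infinitePi μ ∧ ∀ k b, (μ k).real {b} = if b then q k else 1 - q k := by
  have := hP.1
  have := hP.isProbabilityMeasure_map_eval
  refine ⟨fun k => P.map fun w => w k, this, ?_, hP.map_eval_real_singleton⟩
  refine measure_ext_of_cofinal_map_restrict fun I => ?_
  obtain ⟨k, hk⟩ := I.bddBelow
  obtain ⟨l, hl⟩ := I.bddAbove
  refine ⟨Finset.Icc k l, fun i hi => Finset.mem_Icc.2 ⟨hk hi, hl hi⟩,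
    ext_of_singleton fun x => ?_⟩
  obtain ⟨b, rfl⟩ : ∃ b : Xspace, (Finset.Icc k l).restrict b = x :=
    ⟨fun i => if h : i ∈ Finset.Icc k l then x ⟨i, h⟩ else false, by ext i; simp⟩
  have preimage_eq : (Finset.Icc k l).restrict (π := fun _ => Bool) ⁻¹'
      {(Finset.Icc k l).restrict b} = {w | ∀ i ∈ Finset.Icc k l, w i = b i} := by
    ext w
    simp [funext_iff]
  rw [infinitePi_map_restrict, pi_singleton,
    Measure.map_apply (Finset.measurable_restrict _) (measurableSet_singleton _), preimage_eq,
    hP.2 k l b]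
  simp only [hP.map_eval_singleton, Finset.restrict]
  exact (Finset.prod_coe_sort _ fun i => ENNReal.ofReal (if b i then q i else 1 - q i)).symm

end IsProductMeasure

/-- For a product measure with coordinate probabilities uniformly bounded away
from `0` and `1`, the shift is nonsingular iff `∑_k (P_k({0}) - P_{k-1}({0}))² < ∞`. -/
theorem shift_nonsingular_iff_kakutani (q : ℤ → ℝ) (P : Measure Xspace)
    (hP : IsProductMeasure q P)
    (p : ℝ) (hp0 : 0 < p) (hp1 : p < 1) (hq : ∀ k : ℤ, p < q k ∧ q k < 1 - p) :
    ShiftNonsingular P ↔ Summable (fun k : ℤ => ((1 - q k) - (1 - q (k - 1))) ^ 2) := by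
  obtain ⟨μ, _, rfl, hμ⟩ := hP.exists_eq_infinitePi
  have atom_ge (k : ℤ) (b : Bool) : p ≤ (μ k).real {b} := by
    rw [hμ]
    split_ifs <;> linarith [hq k]
  refine (shift_nonsingular_iff_kakutani_general (Equiv.subRight 1) μ hp0 atom_ge).trans ?_
  simp only [sum_sq_real_singleton_sub, summable_mul_left_iff (two_ne_zero' ℝ)]
  simp [hμ]
end
end

section
/- For the constructed product measure P one has ∑_{k∈ℤ} (P_k({0}) − P_{k−1}({0}))² = 2 ∑_{t=1}^{∞} ((λ_t − 1)/(2(1+λ_t)))², and this sum is finite; consequently the shift T is nonsingular with respect to P. -/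
open MeasureTheory Filter Topology

noncomputable section

/-!
Let `μ = ⨂ f_i ν_i` and `ν = ⨂ ν_i` be infinite products of probability measures. If the products
`∏_{i ∈ s} ∫ f_i² dν_i` over finite `s` are bounded by `C`, Cauchy–Schwarz gives
`μ(A)² ≤ C ν(A)` for every cylinder `A`, and as cylinders are dense in measure, `μ ≪ ν`. For coin
tosses with biases `p_i`, `q_i` the factor is `∫ f_i² dν_i = 1 + (p_i - q_i)² / (q_i (1 - q_i))`, so
the products are bounded as soon as `∑ (p_i - q_i)² / (q_i (1 - q_i))` converges. This is applied in
both directions to a product measure and its shift, whose biases at `k` are `q_k` and `q_{k-1}`.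

In Kosloff's construction `P_k({0})` differs from `P_{k-1}({0})` only at the two ends of each block
`-N_t < k ≤ -M_{t-1}`, by `1/2 - 1/(1 + λ_t) = (λ_t - 1) / (2 (1 + λ_t))`, which gives the value of
the sum. This quantity is at most `1` and at most `log λ_t ≤ ε_t`, hence the sum is finite; and
`λ_t` is bounded, so the biases stay away from `0` and `1`.
-/

open scoped ENNReal unitInterval ProbabilityTheory

section AbsolutelyContinuous

variable {Ω : Type*} [mΩ : MeasurableSpace Ω] {μ ν : Measure Ω}

theorem absolutelyContinuous_of_generateFrom_isSetAlgebra [IsFiniteMeasure μ] [IsFiniteMeasure ν]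
    {𝒜 : Set (Set Ω)} (h𝒜 : IsSetAlgebra 𝒜) (hgen : mΩ = MeasurableSpace.generateFrom 𝒜)
    (hac : ∀ ε ≠ 0, ∃ δ ≠ 0, ∀ s ∈ 𝒜, ν s < δ → μ s < ε) : μ ≪ ν := by
  refine .mk fun A hA hνA => ?_
  by_contra hμA
  have hhalf : μ A / 2 ≠ 0 := by simpa using hμA
  obtain ⟨δ, hδ, hδA⟩ := hac _ hhalf
  obtain ⟨η, hη, hηδ⟩ := ENNReal.lt_iff_exists_nnreal_btwn.1
    (show 0 < min δ (μ A / 2) from lt_min hδ.bot_lt hhalf.bot_lt)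
  obtain ⟨t, ht, htA⟩ := (Measure.MeasureDense.of_generateFrom_isSetAlgebra_finite (μ + ν)
    h𝒜 hgen).approx A hA (measure_ne_top _ _) η (by exact_mod_cast hη)
  have hclose : μ (symmDiff A t) + ν (symmDiff A t) < min δ (μ A / 2) := by
    rw [ENNReal.ofReal_coe_nnreal] at htA
    exact htA.trans hηδ
  have hνt : ν t < δ := calc
    ν t ≤ ν A + ν (symmDiff A t) := (measure_mono fun x hx => by
      by_cases hxA : x ∈ A <;> simp [Set.mem_symmDiff, hx, hxA]).trans (measure_union_le _ _)
    _ ≤ μ (symmDiff A t) + ν (symmDiff A t) := by rw [hνA, zero_add]; exact le_add_self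
    _ < δ := hclose.trans_le (min_le_left _ _)
  refine lt_irrefl (μ A) ?_
  calc μ A ≤ μ t + μ (symmDiff A t) := (measure_mono fun x hx => by
        by_cases hxt : x ∈ t <;> simp [Set.mem_symmDiff, hx, hxt]).trans (measure_union_le _ _)
    _ < μ A / 2 + μ A / 2 := ENNReal.add_lt_add (hδA t ht hνt)
        (le_self_add.trans_lt (hclose.trans_le (min_le_right _ _)))
    _ = μ A := ENNReal.add_halves _

theorem sq_withDensity_apply_le [SFinite ν] {f : Ω → ℝ≥0∞} (hf : Measurable f) (s : Set Ω) :
    ν.withDensity f s ^ 2 ≤ (∫⁻ x, f x ^ 2 ∂ν) * ν s := by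
  have holder := ENNReal.lintegral_mul_le_Lp_mul_Lq (ν.restrict s) Real.HolderConjugate.two_two
    hf.aemeasurable (aemeasurable_const (b := (1 : ℝ≥0∞)))
  simp only [Pi.mul_apply, mul_one, ENNReal.rpow_two, one_pow, lintegral_const,
    Measure.restrict_apply_univ, one_mul] at holder
  calc ν.withDensity f s ^ 2 = (∫⁻ x in s, f x ∂ν) ^ 2 := by rw [withDensity_apply' f s]
    _ ≤ ((∫⁻ x in s, f x ^ 2 ∂ν) ^ (1 / 2 : ℝ) * ν s ^ (1 / 2 : ℝ)) ^ 2 := by gcongr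
    _ = (∫⁻ x in s, f x ^ 2 ∂ν) * ν s := by
        rw [← ENNReal.mul_rpow_of_nonneg _ _ (by norm_num), ← ENNReal.rpow_mul_natCast]
        norm_num
    _ ≤ (∫⁻ x, f x ^ 2 ∂ν) * ν s := by gcongr; exact Measure.restrict_le_self

end AbsolutelyContinuous

section Product

variable {ι : Type*} {X : ι → Type*} [∀ i, MeasurableSpace (X i)] (ν : ∀ i, Measure (X i))
  [∀ i, IsProbabilityMeasure (ν i)] {f : ∀ i, X i → ℝ≥0∞}

theorem lintegral_pi_prod [Fintype ι] (hf : ∀ i, Measurable (f i)) :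
    ∫⁻ x, ∏ i, f i (x i) ∂Measure.pi ν = ∏ i, ∫⁻ x, f i x ∂ν i := by
  rw [ProbabilityTheory.lintegral_prod_eq_prod_lintegral_of_indepFun Finset.univ
    (fun i (x : ∀ j, X j) => f i (x i))
    (ProbabilityTheory.iIndepFun_pi fun i => (hf i).aemeasurable)
    fun i => (hf i).comp (measurable_pi_apply i)]
  exact Finset.prod_congr rfl fun i _ => (measurePreserving_eval ν i).lintegral_comp (hf i)

theorem pi_withDensity [Fintype ι] (hf : ∀ i, Measurable (f i))
    [∀ i, SigmaFinite ((ν i).withDensity (f i))] :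
    Measure.pi (fun i => (ν i).withDensity (f i)) =
      (Measure.pi ν).withDensity fun x => ∏ i, f i (x i) := by
  refine Measure.pi_eq fun s hs => ?_
  have hbox : MeasurableSet (Set.univ.pi s) := .univ_pi hs
  have hind : (Set.univ.pi s).indicator (fun x => ∏ i, f i (x i)) =
      fun x => ∏ i, (s i).indicator (f i) (x i) := by
    ext x
    by_cases hx : x ∈ Set.univ.pi s
    · simp_all
    · obtain ⟨i, hi⟩ : ∃ i, x i ∉ s i := by simpa [Set.mem_pi] using hx
      rw [Set.indicator_of_notMem hx, Finset.prod_eq_zero (Finset.mem_univ i) (by simp [hi])]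
  calc (Measure.pi ν).withDensity (fun x => ∏ i, f i (x i)) (Set.univ.pi s)
      = ∫⁻ x, ∏ i, (s i).indicator (f i) (x i) ∂Measure.pi ν := by
        rw [withDensity_apply _ hbox, ← lintegral_indicator hbox, hind]
    _ = ∏ i, ∫⁻ x, (s i).indicator (f i) x ∂ν i :=
        lintegral_pi_prod ν fun i => (hf i).indicator (hs i)
    _ = ∏ i, (ν i).withDensity (f i) (s i) := by
        simp only [lintegral_indicator (hs _), withDensity_apply _ (hs _)]

theorem infinitePi_withDensity_absolutelyContinuous (hf : ∀ i, Measurable (f i))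
    [∀ i, IsProbabilityMeasure ((ν i).withDensity (f i))] {C : ℝ≥0∞} (hC : C ≠ ⊤)
    (hle : ∀ s : Finset ι, ∏ i ∈ s, ∫⁻ x, f i x ^ 2 ∂ν i ≤ C) :
    Measure.infinitePi (fun i => (ν i).withDensity (f i)) ≪ Measure.infinitePi ν := by
  refine absolutelyContinuous_of_generateFrom_isSetAlgebra isSetAlgebra_measurableCylinders
    generateFrom_measurableCylinders.symm fun ε hε => ?_
  obtain ⟨δ, hδ, hδε⟩ := ENNReal.exists_nnreal_pos_mul_lt hC (pow_ne_zero 2 hε)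
  refine ⟨δ, by simpa using hδ.ne', fun A hA hνA => ?_⟩
  obtain ⟨s, S, hS, rfl⟩ := (mem_measurableCylinders A).1 hA
  rw [Measure.infinitePi_cylinder _ hS] at hνA ⊢
  rw [pi_withDensity (fun i : s => ν i) fun i => hf i]
  refine (ENNReal.pow_lt_pow_left_iff two_ne_zero).1 ?_
  calc _ ≤ (∫⁻ x, (∏ i : s, f i (x i)) ^ 2 ∂Measure.pi fun i : s => ν i) *
        Measure.pi (fun i : s => ν i) S := sq_withDensity_apply_le (by fun_prop) S
    _ = (∏ i ∈ s, ∫⁻ x, f i x ^ 2 ∂ν i) * Measure.pi (fun i : s => ν i) S := by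
        simp only [← Finset.prod_pow]
        rw [lintegral_pi_prod _ fun i : s => (hf i).pow_const 2,
          Finset.prod_coe_sort s fun i => ∫⁻ x, f i x ^ 2 ∂ν i]
    _ ≤ C * δ := by gcongr; exact hle s
    _ = δ * C := mul_comm _ _
    _ < ε ^ 2 := hδε

end Product

section Bernoulli

/-- The Radon–Nikodym density of `Ber(true, false, p)` with respect to `Ber(true, false, q)` for
`0 < q < 1`; at `q = 0` and `q = 1` the value with vanishing denominator is `0`. -/
def bernoulliDensity (p q : I) (b : Bool) : ℝ≥0∞ :=
  ENNReal.ofReal (if b then p / q else (1 - p) / (1 - q))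

theorem bernoulliMeasure_singleton (p : I) (b : Bool) :
    Ber(true, false, p) {b} = ENNReal.ofReal (if b then (p : ℝ) else 1 - p) := by
  cases b
  · simp only [measurableSet_singleton, Set.mem_singleton_iff, Bool.true_eq_false,
      Bool.false_eq_true, not_false_eq_true, if_false, ENNReal.ofReal,
      ProbabilityTheory.bernoulliMeasure_apply_of_notMem_of_mem,
      Real.toNNReal_of_nonneg (sub_nonneg.2 p.2.2)]
    rfl
  · simp only [measurableSet_singleton, Set.mem_singleton_iff, Bool.false_eq_true,
      not_false_eq_true, if_true, ENNReal.ofReal,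
      ProbabilityTheory.bernoulliMeasure_apply_of_mem_of_notMem, Real.toNNReal_of_nonneg p.2.1]
    rfl

theorem withDensity_bernoulliDensity (p : I) {q : I} (h0 : 0 < q) (h1 : q < 1) :
    Ber(true, false, q).withDensity (bernoulliDensity p q) = Ber(true, false, p) := by
  have hq1 : 0 < 1 - (q : ℝ) := sub_pos.2 h1
  have hq0 : 0 < (q : ℝ) := h0
  have hp : 0 ≤ 1 - (p : ℝ) := sub_nonneg.2 p.2.2
  refine Measure.ext_of_singleton fun b => ?_
  rw [withDensity_apply _ (measurableSet_singleton b), lintegral_singleton,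
    bernoulliMeasure_singleton, bernoulliMeasure_singleton, bernoulliDensity]
  cases b
  · simp only [Bool.false_eq_true, if_false]
    rw [← ENNReal.ofReal_mul (div_nonneg hp hq1.le), div_mul_cancel₀ _ hq1.ne']
  · simp only [if_true]
    rw [← ENNReal.ofReal_mul (div_nonneg p.2.1 hq0.le), div_mul_cancel₀ _ hq0.ne']

theorem lintegral_sq_bernoulliDensity (p : I) {q : I} (h0 : 0 < q) (h1 : q < 1) :
    ∫⁻ b, bernoulliDensity p q b ^ 2 ∂Ber(true, false, q) =
      ENNReal.ofReal (1 + ((p : ℝ) - q) ^ 2 / (q * (1 - q))) := by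
  have hq1 : 0 < 1 - (q : ℝ) := sub_pos.2 h1
  have hq0 : 0 < (q : ℝ) := h0
  have hp : 0 ≤ 1 - (p : ℝ) := sub_nonneg.2 p.2.2
  rw [lintegral_fintype, Fintype.sum_bool]
  simp only [bernoulliMeasure_singleton, bernoulliDensity, if_true, Bool.false_eq_true, if_false]
  rw [← ENNReal.ofReal_pow (div_nonneg p.2.1 hq0.le), ← ENNReal.ofReal_pow (div_nonneg hp hq1.le),
    ← ENNReal.ofReal_mul (by positivity), ← ENNReal.ofReal_mul (by positivity),
    ← ENNReal.ofReal_add (by positivity) (by positivity)]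
  congr 1
  field_simp
  ring

theorem infinitePi_bernoulli_absolutelyContinuous {ι : Type*} {p q : ι → I}
    (h0 : ∀ i, 0 < q i) (h1 : ∀ i, q i < 1)
    (hs : Summable fun i => ((p i : ℝ) - q i) ^ 2 / (q i * (1 - q i))) :
    Measure.infinitePi (fun i => Ber(true, false, p i)) ≪
      Measure.infinitePi fun i => Ber(true, false, q i) := by
  have hdens : (fun i => Ber(true, false, p i)) =
      fun i => Ber(true, false, q i).withDensity (bernoulliDensity (p i) (q i)) :=
    funext fun i => (withDensity_bernoulliDensity (p i) (h0 i) (h1 i)).symm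
  have : ∀ i, IsProbabilityMeasure
      (Ber(true, false, q i).withDensity (bernoulliDensity (p i) (q i))) := fun i => by
    rw [withDensity_bernoulliDensity (p i) (h0 i) (h1 i)]; infer_instance
  rw [hdens]
  refine infinitePi_withDensity_absolutelyContinuous _ (fun i => .of_discrete)
    (ENNReal.ofReal_ne_top (r := Real.exp (∑' i, ((p i : ℝ) - q i) ^ 2 / (q i * (1 - q i)))))
    fun s => ?_
  have hterm (i : ι) : 0 ≤ ((p i : ℝ) - q i) ^ 2 / (q i * (1 - q i)) :=
    div_nonneg (sq_nonneg _) (mul_nonneg (q i).2.1 (sub_nonneg.2 (q i).2.2))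
  calc ∏ i ∈ s, ∫⁻ b, bernoulliDensity (p i) (q i) b ^ 2 ∂Ber(true, false, q i)
      = ENNReal.ofReal (∏ i ∈ s, (1 + ((p i : ℝ) - q i) ^ 2 / (q i * (1 - q i)))) := by
        rw [ENNReal.ofReal_prod_of_nonneg fun i _ => add_nonneg zero_le_one (hterm i)]
        exact Finset.prod_congr rfl fun i _ => lintegral_sq_bernoulliDensity (p i) (h0 i) (h1 i)
    _ ≤ ENNReal.ofReal (Real.exp (∑' i, ((p i : ℝ) - q i) ^ 2 / (q i * (1 - q i)))) := by
        refine ENNReal.ofReal_le_ofReal ?_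
        refine (Real.prod_one_add_le_exp_sum s hterm).trans ?_
        exact Real.exp_le_exp.2 (hs.sum_le_tsum s fun i _ => hterm i)

end Bernoulli

section Shift

theorem eq_of_map_restrict_Icc_eq {X : ℤ → Type*} [∀ k, MeasurableSpace (X k)]
    {μ ν : Measure (∀ k, X k)} [IsFiniteMeasure μ]
    (h : ∀ k l : ℤ, μ.map (Finset.Icc k l).restrict = ν.map (Finset.Icc k l).restrict) : μ = ν := by
  refine IsProjectiveLimit.unique (P := fun s => μ.map s.restrict) (fun _ => rfl) fun s => ?_
  obtain ⟨k, hk⟩ := s.bddBelow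
  obtain ⟨l, hl⟩ := s.bddAbove
  have hsub : s ⊆ Finset.Icc k l := fun i hi => Finset.mem_Icc.2 ⟨hk hi, hl hi⟩
  beta_reduce
  rw [← Finset.restrict₂_comp_restrict hsub,
    ← Measure.map_map (Finset.measurable_restrict₂ hsub) (Finset.measurable_restrict _),
    ← Measure.map_map (Finset.measurable_restrict₂ hsub) (Finset.measurable_restrict _), h k l]

theorem IsProductMeasure.eq_infinitePi {q : ℤ → I} {P : Measure Xspace}
    (hP : IsProductMeasure (fun k => q k) P) :
    P = Measure.infinitePi fun k => Ber(true, false, q k) := by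
  have := hP.1
  refine eq_of_map_restrict_Icc_eq fun k l => Measure.ext_of_singleton fun y => ?_
  let b : ℤ → Bool := fun i => if hi : i ∈ Finset.Icc k l then y ⟨i, hi⟩ else false
  have hb (i : Finset.Icc k l) : b i = y i := dif_pos i.2
  have hfiber : (Finset.Icc k l).restrict (π := fun _ => Bool) ⁻¹' {y} =
      {w : Xspace | ∀ i ∈ Finset.Icc k l, w i = b i} := by
    ext w
    simp only [Set.mem_preimage, Set.mem_singleton_iff, funext_iff, Subtype.forall,
      Finset.restrict, Set.mem_ofPred_eq]
    exact forall₂_congr fun i hi => by rw [hb ⟨i, hi⟩]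
  rw [Measure.infinitePi_map_restrict, Measure.pi_singleton,
    Measure.map_apply (Finset.measurable_restrict _) (measurableSet_singleton y), hfiber, hP.2,
    ← Finset.prod_coe_sort]
  exact Finset.prod_congr rfl fun i _ => by rw [hb, bernoulliMeasure_singleton]

theorem map_shiftInv_infinitePi (μ : ℤ → Measure Bool) [∀ k, IsProbabilityMeasure (μ k)] :
    (Measure.infinitePi μ).map shiftInv = Measure.infinitePi fun k => μ (k - 1) := by
  have hmap := Measure.infinitePi_map_piCongrLeft (fun k : ℤ => μ (k - 1)) (Equiv.addRight (1 : ℤ))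
  simp only [Equiv.coe_addRight, add_sub_cancel_right] at hmap
  have hshift :
      shiftInv = MeasurableEquiv.piCongrLeft (fun _ => Bool) (Equiv.addRight (1 : ℤ)) := by
    ext w i
    have happly := Equiv.piCongrLeft_apply_apply (fun _ => Bool) (Equiv.addRight (1 : ℤ)) w (i - 1)
    simp only [Equiv.coe_addRight, sub_add_cancel] at happly
    exact happly.symm
  rw [hshift, hmap]

theorem IsProductMeasure.shiftNonsingular {q : ℤ → ℝ} {P : Measure Xspace}
    (hP : IsProductMeasure q P) {δ : ℝ} (hδ : 0 < δ) (hδq : ∀ k, δ ≤ q k) (hqδ : ∀ k, q k ≤ 1 - δ)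
    (hs : Summable fun k => (q k - q (k - 1)) ^ 2) : ShiftNonsingular P := by
  lift q to ℤ → I using fun k => ⟨hδ.le.trans (hδq k), by linarith [hqδ k]⟩
  beta_reduce at hδq hqδ hs
  have hq0 (k : ℤ) : 0 < q k := hδ.trans_le (hδq k)
  have hq1 (k : ℤ) : q k < 1 := show (q k : ℝ) < 1 by linarith [hqδ k]
  have hdiv (j : ℤ → ℤ) : Summable fun k =>
      ((q k : ℝ) - q (k - 1)) ^ 2 / (q (j k) * (1 - q (j k))) := by
    refine .of_nonneg_of_le (fun k => ?_) (fun k => ?_) (hs.div_const (δ * δ))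
    · exact div_nonneg (sq_nonneg _) (mul_nonneg (q _).2.1 (sub_nonneg.2 (q _).2.2))
    · have hδj : δ ≤ 1 - q (j k) := by linarith [hqδ (j k)]
      exact div_le_div_of_nonneg_left (sq_nonneg _) (by positivity)
        (mul_le_mul (hδq (j k)) hδj hδ.le (q (j k)).2.1)
  rw [hP.eq_infinitePi]
  unfold ShiftNonsingular
  rw [map_shiftInv_infinitePi]
  constructor
  · refine infinitePi_bernoulli_absolutelyContinuous hq0 hq1 ?_
    exact (hdiv id).congr fun k => by rw [id, sub_sq_comm]
  · exact infinitePi_bernoulli_absolutelyContinuous (fun k => hq0 _) (fun k => hq1 _)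
      (hdiv (· - 1))

end Shift

section Kosloff

theorem zpow_neg_floor_logb_add_one_le_inv {b x : ℝ} (hb : 1 < b) (hx : 0 < x) :
    b ^ (-(⌊Real.logb b x⌋ + 1)) ≤ x⁻¹ := by
  have hb0 : 0 < b := one_pos.trans hb
  calc b ^ (-(⌊Real.logb b x⌋ + 1)) = b ^ (-(⌊Real.logb b x⌋ + 1) : ℝ) := by
        rw [← Real.rpow_intCast]; push_cast; rfl
    _ ≤ b ^ (-Real.logb b x) :=
        Real.rpow_le_rpow_of_exponent_le hb.le (neg_le_neg (Int.lt_floor_add_one _).le)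
    _ = x⁻¹ := by rw [Real.rpow_neg hb0.le, Real.rpow_logb hb0 hb.ne' hx]

namespace KosloffData

variable (D : KosloffData)

theorem M_lt_N_succ (t : ℕ) : D.M t < D.N (t + 1) := by
  rw [D.N_def (t + 1) t.succ_pos, Nat.add_sub_cancel]
  exact Nat.lt_add_of_pos_right (D.nn_pos (t + 1) t.succ_pos)

theorem N_succ_lt_M_succ (t : ℕ) : D.N (t + 1) < D.M (t + 1) := by
  rw [D.M_def (t + 1) t.succ_pos, D.m_def (t + 1) t.succ_pos]
  have hN : 0 < D.N (t + 1) := (Nat.zero_le _).trans_lt (D.M_lt_N_succ t)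
  exact Nat.lt_add_of_pos_right (by positivity)

theorem strictMono_M : StrictMono D.M :=
  strictMono_nat_of_lt_succ fun t => (D.M_lt_N_succ t).trans (D.N_succ_lt_M_succ t)

theorem strictMono_N_succ : StrictMono fun t => D.N (t + 1) :=
  strictMono_nat_of_lt_succ fun t => (D.N_succ_lt_M_succ t).trans (D.M_lt_N_succ (t + 1))

theorem one_le_M (t : ℕ) : 1 ≤ D.M t :=
  D.M_zero.ge.trans (D.strictMono_M.monotone t.zero_le)

theorem M_ne_N_succ (s t : ℕ) : D.M s ≠ D.N (t + 1) := by
  rcases le_or_gt s t with hst | hts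
  · exact ((D.strictMono_M.monotone hst).trans_lt (D.M_lt_N_succ t)).ne
  · exact ((D.N_succ_lt_M_succ t).trans_le (D.strictMono_M.monotone hts)).ne'

theorem exists_neg_M_succ_lt_le_neg_M {k : ℤ} (hk : k < 0) :
    ∃ t, -(D.M (t + 1) : ℤ) < k ∧ k ≤ -(D.M t : ℤ) := by
  obtain ⟨t, hMk, hkM⟩ := D.strictMono_M.exists_between_of_tendsto_atTop
    D.strictMono_M.tendsto_atTop (x := k.natAbs + 1) (by rw [D.M_zero]; omega)
  exact ⟨t, by omega, by omega⟩

theorem one_le_lam (t : ℕ) : 1 ≤ D.lam (t + 1) := by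
  rw [D.lam_def (t + 1) t.succ_pos]
  exact Real.one_le_exp (by positivity)

theorem lam_le_exp_eps (t : ℕ) : D.lam (t + 1) ≤ Real.exp (D.eps (t + 1)) := by
  have hε : 0 < D.eps (t + 1) := D.eps_pos (t + 1) t.succ_pos
  have hM : (1 : ℝ) ≤ D.M t := by exact_mod_cast D.one_le_M t
  rw [D.lam_def (t + 1) t.succ_pos, Nat.add_sub_cancel]
  refine Real.exp_le_exp.2 ?_
  calc _ ≤ ((D.M t : ℝ) / D.eps (t + 1))⁻¹ :=
        zpow_neg_floor_logb_add_one_le_inv one_lt_two (by positivity)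
    _ = D.eps (t + 1) / D.M t := inv_div _ _
    _ ≤ D.eps (t + 1) := div_le_self hε.le hM

theorem exists_lam_le : ∃ L, ∀ t, D.lam (t + 1) ≤ L := by
  obtain ⟨E, hE⟩ := D.eps_summable.tendsto_atTop_zero.bddAbove_range
  exact ⟨Real.exp E, fun t => (D.lam_le_exp_eps t).trans (Real.exp_le_exp.2 (hE ⟨t + 1, rfl⟩))⟩

/-- The amount `1/2 - 1/(1 + λ_{t+1})` by which `P_k({0})` changes at both ends of the block
`-N_{t+1} < k ≤ -M_t`; the index is shifted so that it starts at `0`. -/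
def jumpSize (t : ℕ) : ℝ := (D.lam (t + 1) - 1) / (2 * (1 + D.lam (t + 1)))

theorem half_sub_one_div_eq_jumpSize (t : ℕ) :
    1 / 2 - 1 / (1 + D.lam (t + 1)) = D.jumpSize t := by
  have := D.one_le_lam t
  rw [jumpSize]
  field_simp
  ring

theorem jumpSize_nonneg (t : ℕ) : 0 ≤ D.jumpSize t := by
  have := D.one_le_lam t
  exact div_nonneg (by linarith) (by linarith)

theorem jumpSize_le_one (t : ℕ) : D.jumpSize t ≤ 1 := by
  have := D.one_le_lam t
  exact div_le_one_of_le₀ (by linarith) (by linarith)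

theorem jumpSize_le_eps (t : ℕ) : D.jumpSize t ≤ D.eps (t + 1) := by
  have hone := D.one_le_lam t
  have hlog : Real.log (D.lam (t + 1)) ≤ D.eps (t + 1) :=
    (Real.log_le_iff_le_exp (by linarith)).2 (D.lam_le_exp_eps t)
  calc D.jumpSize t ≤ (D.lam (t + 1) - 1) / D.lam (t + 1) :=
        div_le_div_of_nonneg_left (by linarith) (by linarith) (by linarith)
    _ = 1 - (D.lam (t + 1))⁻¹ := by rw [sub_div, div_self (by linarith), one_div]
    _ ≤ Real.log (D.lam (t + 1)) := Real.one_sub_inv_le_log_of_pos (by linarith)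
    _ ≤ D.eps (t + 1) := hlog

theorem summable_jumpSize_sq : Summable fun t => D.jumpSize t ^ 2 :=
  .of_nonneg_of_le (fun _ => sq_nonneg _)
    (fun t => (pow_le_of_le_one (D.jumpSize_nonneg t) (D.jumpSize_le_one t) two_ne_zero).trans
      (D.jumpSize_le_eps t))
    ((summable_nat_add_iff 1).2 D.eps_summable)

/-- The sites `k` at which `P_k({0}) ≠ P_{k-1}({0})` may occur, for the block
`-N_{t+1} < k ≤ -M_t`: its first site is indexed by `inr t`, the site after its last by `inl t`. -/
def jumpSite : ℕ ⊕ ℕ → ℤ := Sum.elim (fun t => 1 - D.M t) fun t => 1 - D.N (t + 1)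

theorem injective_jumpSite : Function.Injective D.jumpSite := by
  refine Function.Injective.sumElim (fun s t h => D.strictMono_M.injective ?_)
    (fun s t h => D.strictMono_N_succ.injective ?_) (fun s t h => D.M_ne_N_succ s t ?_) <;>
  simpa using h

end KosloffData

namespace IsKosloffMeasure

variable {D : KosloffData} {p : ℤ → ℝ} {P : Measure Xspace}

theorem isProductMeasure (hP : IsKosloffMeasure D p P) : IsProductMeasure (fun k => 1 - p k) P := by
  refine ⟨hP.1, fun k l b => ?_⟩
  simpa only [sub_sub_cancel, coordWt] using hP.2.2.2.2 k l b

theorem p_of_nonneg (hP : IsKosloffMeasure D p P) {k : ℤ} (hk : 0 ≤ k) : p k = 1 / 2 :=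
  hP.2.1 k hk

theorem p_of_neg_N_lt (hP : IsKosloffMeasure D p P) {t : ℕ} {k : ℤ}
    (hNk : -(D.N (t + 1) : ℤ) < k) (hkM : k ≤ -(D.M t : ℤ)) : p k = 1 / (1 + D.lam (t + 1)) :=
  hP.2.2.1 (t + 1) t.succ_pos k hNk hkM

theorem p_of_le_neg_N (hP : IsKosloffMeasure D p P) {t : ℕ} {k : ℤ}
    (hMk : -(D.M (t + 1) : ℤ) < k) (hkN : k ≤ -(D.N (t + 1) : ℤ)) : p k = 1 / 2 :=
  hP.2.2.2.1 (t + 1) t.succ_pos k hMk hkN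

theorem p_one_sub_M (hP : IsKosloffMeasure D p P) (t : ℕ) : p (1 - D.M t) = 1 / 2 := by
  cases t with
  | zero => exact hP.p_of_nonneg (by simp [D.M_zero])
  | succ t =>
    have := D.N_succ_lt_M_succ t
    exact hP.p_of_le_neg_N (t := t) (by omega) (by omega)

theorem p_jumpSite_inl_sub (hP : IsKosloffMeasure D p P) (t : ℕ) :
    p (D.jumpSite (.inl t)) - p (D.jumpSite (.inl t) - 1) = D.jumpSize t := by
  have := D.M_lt_N_succ t
  rw [KosloffData.jumpSite, Sum.elim_inl, hP.p_one_sub_M, hP.p_of_neg_N_lt (t := t) (by omega)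
    (by omega), D.half_sub_one_div_eq_jumpSize]

theorem p_jumpSite_inr_sub (hP : IsKosloffMeasure D p P) (t : ℕ) :
    p (D.jumpSite (.inr t)) - p (D.jumpSite (.inr t) - 1) = -D.jumpSize t := by
  have hMN := D.M_lt_N_succ t
  have hNM := D.N_succ_lt_M_succ t
  rw [KosloffData.jumpSite, Sum.elim_inr, hP.p_of_neg_N_lt (t := t) (by omega) (by omega),
    hP.p_of_le_neg_N (t := t) (by omega) (by omega), ← D.half_sub_one_div_eq_jumpSize, neg_sub]

theorem p_sub_one_eq (hP : IsKosloffMeasure D p P) {k : ℤ} (hk : k ∉ Set.range D.jumpSite) :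
    p (k - 1) = p k := by
  have hM (t : ℕ) : 1 - (D.M t : ℤ) ≠ k := fun h => hk ⟨.inl t, h⟩
  have hN (t : ℕ) : 1 - (D.N (t + 1) : ℤ) ≠ k := fun h => hk ⟨.inr t, h⟩
  rcases le_or_gt 0 k with hk0 | hk0
  · have : k ≠ 0 := by simpa [D.M_zero] using (hM 0).symm
    rw [hP.p_of_nonneg hk0, hP.p_of_nonneg (by omega)]
  · obtain ⟨t, hMk, hkM⟩ := D.exists_neg_M_succ_lt_le_neg_M hk0
    have := hM (t + 1)
    have := hN t
    rcases lt_or_ge (-(D.N (t + 1) : ℤ)) k with hNk | hkN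
    · rw [hP.p_of_neg_N_lt hNk hkM, hP.p_of_neg_N_lt (t := t) (by omega) (by omega)]
    · rw [hP.p_of_le_neg_N hMk hkN, hP.p_of_le_neg_N (t := t) (by omega) (by omega)]

theorem hasSum_sq_sub (hP : IsKosloffMeasure D p P) :
    HasSum (fun k => (p k - p (k - 1)) ^ 2) (2 * ∑' t, D.jumpSize t ^ 2) := by
  have hoff (k : ℤ) (hk : k ∉ Set.range D.jumpSite) : (p k - p (k - 1)) ^ 2 = 0 := by
    rw [hP.p_sub_one_eq hk, sub_self, sq, zero_mul]
  rw [← D.injective_jumpSite.hasSum_iff hoff, two_mul]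
  refine .sum ?_ ?_
  · simpa only [Function.comp_def, hP.p_jumpSite_inl_sub] using D.summable_jumpSize_sq.hasSum
  · simpa only [Function.comp_def, hP.p_jumpSite_inr_sub, neg_sq]
      using D.summable_jumpSize_sq.hasSum

theorem eq_half_or_exists_eq_one_div (hP : IsKosloffMeasure D p P) (k : ℤ) :
    p k = 1 / 2 ∨ ∃ t, p k = 1 / (1 + D.lam (t + 1)) := by
  rcases le_or_gt 0 k with hk | hk
  · exact .inl (hP.p_of_nonneg hk)
  · obtain ⟨t, hMk, hkM⟩ := D.exists_neg_M_succ_lt_le_neg_M hk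
    rcases lt_or_ge (-(D.N (t + 1) : ℤ)) k with hNk | hkN
    · exact .inr ⟨t, hP.p_of_neg_N_lt hNk hkM⟩
    · exact .inl (hP.p_of_le_neg_N hMk hkN)

theorem exists_pos_le_p_le_half (hP : IsKosloffMeasure D p P) :
    ∃ δ > 0, ∀ k, δ ≤ p k ∧ p k ≤ 1 / 2 := by
  obtain ⟨L, hL⟩ := D.exists_lam_le
  have hL1 : 1 ≤ L := (D.one_le_lam 0).trans (hL 0)
  refine ⟨1 / (1 + L), by positivity, fun k => ?_⟩
  rcases hP.eq_half_or_exists_eq_one_div k with hk | ⟨t, hk⟩ <;> rw [hk]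
  · exact ⟨one_div_le_one_div_of_le two_pos (by linarith), le_rfl⟩
  · have := D.one_le_lam t
    have := hL t
    exact ⟨one_div_le_one_div_of_le (by linarith) (by linarith),
      one_div_le_one_div_of_le two_pos (by linarith)⟩

theorem shiftNonsingular (hP : IsKosloffMeasure D p P) : ShiftNonsingular P := by
  obtain ⟨δ, hδ, hp⟩ := hP.exists_pos_le_p_le_half
  refine hP.isProductMeasure.shiftNonsingular hδ (fun k => ?_) (fun k => ?_) ?_
  · linarith [hp k]
  · linarith [hp k]
  · exact hP.hasSum_sq_sub.summable.congr fun k => by ring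

end IsKosloffMeasure

end Kosloff

/-- For the constructed measure,
`∑_k (P_k({0}) - P_{k-1}({0}))² = 2 ∑_{t≥1} ((λ_t-1)/(2(1+λ_t)))² < ∞`, and consequently the
shift is nonsingular. -/
theorem kakutani_sum_eq_and_nonsingular (D : KosloffData) (p : ℤ → ℝ) (P : Measure Xspace)
    (hP : IsKosloffMeasure D p P) :
    Summable (fun k : ℤ => (p k - p (k - 1)) ^ 2) ∧
    (∑' k : ℤ, (p k - p (k - 1)) ^ 2)
        = 2 * ∑' t : ℕ, ((D.lam (t + 1) - 1) / (2 * (1 + D.lam (t + 1)))) ^ 2 ∧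
    ShiftNonsingular P :=
  ⟨hP.hasSum_sq_sub.summable, hP.hasSum_sq_sub.tsum_eq, hP.shiftNonsingular⟩
end
end
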